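/- Let Ψ be a critical branching mechanism which is regularly varying at 0 with index γ ∈ (1,2]. Let (ν_t)_{t>0} be a family of nonzero finite Borel measures on (0,∞) such that φ(t,q) = ∫_{(0,∞)} (1 − e^{−qx}) ν_t(dx) satisfies ∂_t φ(t,q) = −Ψ(φ(t,q)) for all t > 0 and all q ∈ (0,∞], where φ(t,∞) := ν_t((0,∞)). Suppose there exist t₀ > 0, ρ ∈ (0,1], and a function L slowly varying at infinity such that ∫_{(0,x]} y ν_{t₀}(dy) ∼ x^{1−ρ} L(x) as x → ∞. Then there exists a function λ : (0,∞) → (0,∞) with λ(t) → 0 as t → ∞ such that for every bounded continuous f : (0,∞) → ℝ, ν_t((0,∞))^{−1} ∫_{(0,∞)} f(λ(t) x) ν_t(dx) → ∫_{(0,∞)} f dF_{γ,ρ} as t → ∞. -/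

import Mathlib

open MeasureTheory Set Filter

noncomputable section

/-!
The time `G v = ∫ u in v..1, (Ψ u)⁻¹` needed by `v' = -Ψ v` to descend from `1` to `v` linearises
the flow: `G (φ(t, q)) = G (φ(t₀, q)) + t - t₀` for every `q ∈ (0, ∞]`. Write `κ = γ - 1`.

The tail hypothesis at time `t₀` and an Abelian theorem make `φ(t₀, ·)` regularly varying at `0`
with index `ρ`, and L'Hôpital's rule makes `G` regularly varying at `0` with index `-κ`. Choose
`λ(t)` with `φ(t₀, λ(t)) = φ(t, ∞) =: m(t)`. Then `φ(t₀, q λ(t)) ∼ q ^ ρ m(t)`, and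
`G (φ(t, q λ(t)))` equals `G (φ(t₀, q λ(t))) + G (m(t))` up to a constant, so
`G (φ(t, q λ(t))) ∼ (1 + q ^ (-ρκ)) G (m(t))`. Inverting the regular variation of `G`,
`φ(t, q λ(t)) / m(t) → (1 + q ^ (-ρκ)) ^ (-1/κ)`: the Laplace transforms of the rescaled measures
converge. The substitution `y = exp (-x)` turns them into moments on the compact interval `[0, 1]`,
so weak limits exist, and the limits of the exponent at `0` and `∞` exclude atoms at the endpoints.
-/

open scoped Topology BoundedContinuousFunction

/-! ### Regular variation -/

/-- Regular variation of `f` with index `ρ` along `l`, where `l` is `𝓝[>] 0` or `atTop`. Nothing is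
assumed on the sign of `f`; as `x / 0 = 0`, the case `c = 1` says that `f` is eventually nonzero. -/
def RegularlyVarying (f : ℝ → ℝ) (ρ : ℝ) (l : Filter ℝ) : Prop :=
  ∀ c : ℝ, 0 < c → Tendsto (fun x => f (c * x) / f x) l (𝓝 (c ^ ρ))

theorem tendsto_const_mul_nhdsGT_zero {c : ℝ} (hc : 0 < c) :
    Tendsto (fun x => c * x) (𝓝[>] 0) (𝓝[>] 0) :=
  tendsto_iff_comap.2 (comap_mulLeft_nhdsGT_zero hc).ge

theorem eventually_hasDerivAt_comp_const_mul {g g' : ℝ → ℝ} {c : ℝ} (hc : 0 < c)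
    (hg : ∀ᶠ x in 𝓝[>] 0, HasDerivAt g (g' x) x) :
    ∀ᶠ x in 𝓝[>] 0, HasDerivAt (fun x => g (c * x)) (c * g' (c * x)) x := by
  filter_upwards [(tendsto_const_mul_nhdsGT_zero hc).eventually hg] with x hx
  rw [mul_comm c (g' _)]
  exact hx.comp x (hasDerivAt_const_mul c)

theorem eventually_div_lt_of_hasDerivAt {f f' g g' : ℝ → ℝ} {a b c : ℝ}
    (hf : ∀ᶠ x in 𝓝[>] a, HasDerivAt f (f' x) x) (hg : ∀ᶠ x in 𝓝[>] a, HasDerivAt g (g' x) x)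
    (hg' : ∀ᶠ x in 𝓝[>] a, g' x < 0) (hga : Tendsto g (𝓝[>] a) atTop)
    (hbc : b < c) (hdiv : ∀ᶠ x in 𝓝[>] a, f' x / g' x < b) :
    ∀ᶠ x in 𝓝[>] a, f x / g x < c := by
  obtain ⟨d, hd : a < d, hsub⟩ := mem_nhdsGT_iff_exists_Ioo_subset.1
    (hf.and (hg.and (hg'.and hdiv)))
  have hderiv : ∀ x ∈ Ioo a d, HasDerivAt (fun x => f x - b * g x) (f' x - b * g' x) x :=
    fun x hx => (hsub hx).1.sub ((hsub hx).2.1.const_mul b)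
  -- As `g' < 0`, the bound `f' / g' < b` says that `f - b * g` is increasing.
  have hmono : MonotoneOn (fun x => f x - b * g x) (Ioo a d) := by
    refine monotoneOn_of_deriv_nonneg (convex_Ioo a d)
      (fun x hx => (hderiv x hx).continuousAt.continuousWithinAt)
      (fun x hx => (hderiv x (interior_subset hx)).differentiableAt.differentiableWithinAt) ?_
    intro x hx
    obtain ⟨-, -, hneg, hlt⟩ := hsub (interior_subset hx)
    rw [(hderiv x (interior_subset hx)).deriv, sub_nonneg]
    exact ((div_lt_iff_of_neg hneg).1 hlt).le
  obtain ⟨y, hay, hyd⟩ := exists_between hd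
  have hsmall : ∀ᶠ x in 𝓝[>] a, (f y - b * g y) / g x < c - b :=
    (hga.const_div_atTop _).eventually_lt_const (sub_pos.2 hbc)
  filter_upwards [hga.eventually_gt_atTop 0, hsmall, Ioo_mem_nhdsGT hay] with x hgx hx hxy
  have hfx : f x - b * g x ≤ f y - b * g y :=
    hmono ⟨hxy.1, hxy.2.trans hyd⟩ ⟨hay, hyd⟩ hxy.2.le
  rw [div_lt_iff₀ hgx] at hx ⊢
  linarith

theorem lhopital_atTop_nhdsGT {f f' g g' : ℝ → ℝ} {a L : ℝ}
    (hf : ∀ᶠ x in 𝓝[>] a, HasDerivAt f (f' x) x) (hg : ∀ᶠ x in 𝓝[>] a, HasDerivAt g (g' x) x)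
    (hg' : ∀ᶠ x in 𝓝[>] a, g' x < 0) (hga : Tendsto g (𝓝[>] a) atTop)
    (hdiv : Tendsto (fun x => f' x / g' x) (𝓝[>] a) (𝓝 L)) :
    Tendsto (fun x => f x / g x) (𝓝[>] a) (𝓝 L) := by
  refine tendsto_order.2 ⟨fun c hc => ?_, fun c hc => ?_⟩
  · obtain ⟨b, hcb, hbL⟩ := exists_between hc
    have h := eventually_div_lt_of_hasDerivAt (f := fun x => -f x) (f' := fun x => -f' x)
      (hf.mono fun x hx => hx.neg) hg hg' hga (neg_lt_neg hcb) (by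
        filter_upwards [hdiv.eventually_const_lt hbL] with x hx
        rw [neg_div]
        exact neg_lt_neg hx)
    filter_upwards [h] with x hx
    rw [neg_div] at hx
    exact neg_lt_neg_iff.1 hx
  · obtain ⟨b, hLb, hbc⟩ := exists_between hc
    exact eventually_div_lt_of_hasDerivAt hf hg hg' hga hbc (hdiv.eventually_lt_const hLb)

namespace RegularlyVarying

variable {f g g' : ℝ → ℝ} {a b : ℝ} {l : Filter ℝ}

theorem eventually_ne_zero (hf : RegularlyVarying f a l) : ∀ᶠ x in l, f x ≠ 0 := by
  filter_upwards [(hf 1 one_pos).eventually_ne (b₂ := 0) (by simp)] with x hx hfx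
  exact hx (by rw [hfx, div_zero])

theorem mul (hf : RegularlyVarying f a l) (hg : RegularlyVarying g b l) :
    RegularlyVarying (fun x => f x * g x) (a + b) l := fun c hc => by
  simpa only [mul_div_mul_comm, Real.rpow_add hc] using (hf c hc).mul (hg c hc)

theorem neg (hf : RegularlyVarying f a l) : RegularlyVarying (fun x => -f x) a l := fun c hc => by
  simpa only [neg_div_neg_eq] using hf c hc

theorem inv (hf : RegularlyVarying f a l) :
    RegularlyVarying (fun x => (f x)⁻¹) (-a) l := fun c hc => by
  simpa only [inv_div, inv_div_inv, Real.rpow_neg hc.le] using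
    (hf c hc).inv₀ (Real.rpow_pos_of_pos hc a).ne'

theorem rpow_atTop (a : ℝ) : RegularlyVarying (fun x => x ^ a) a atTop := fun c hc => by
  refine tendsto_const_nhds.congr' ?_
  filter_upwards [eventually_gt_atTop 0] with x hx
  rw [Real.mul_rpow hc.le hx.le, mul_div_cancel_right₀ _ (Real.rpow_pos_of_pos hx a).ne']

theorem comp_inv (hf : RegularlyVarying f a atTop) :
    RegularlyVarying (fun x => f x⁻¹) (-a) (𝓝[>] 0) := fun c hc => by
  have h := (hf c⁻¹ (inv_pos.2 hc)).comp tendsto_inv_nhdsGT_zero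
  simpa only [Function.comp_def, ← mul_inv, Real.inv_rpow hc.le, ← Real.rpow_neg hc.le] using h

theorem of_tendsto_div {C : ℝ} (hf : RegularlyVarying f a atTop) (hC : C ≠ 0)
    (h : Tendsto (fun x => g x / f x) atTop (𝓝 C)) : RegularlyVarying g a atTop := fun c hc => by
  have hmul : Tendsto (fun x => c * x) atTop atTop := tendsto_id.const_mul_atTop hc
  have hlim : Tendsto (fun x => g (c * x) / f (c * x) * (f (c * x) / f x) * (g x / f x)⁻¹)
      atTop (𝓝 (C * c ^ a * C⁻¹)) := ((h.comp hmul).mul (hf c hc)).mul (h.inv₀ hC)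
  rw [mul_right_comm, mul_inv_cancel₀ hC, one_mul] at hlim
  refine hlim.congr' ?_
  filter_upwards [hf.eventually_ne_zero, hmul.eventually hf.eventually_ne_zero] with x hx hcx
  rw [div_mul_div_cancel₀ hcx, inv_div, div_mul_div_cancel₀ hx]

theorem of_tendsto_div_rpow_mul (hf : RegularlyVarying f 0 atTop)
    (h : Tendsto (fun x => g x / (x ^ a * f x)) atTop (𝓝 1)) : RegularlyVarying g a atTop := by
  have hmul := (rpow_atTop a).mul hf
  rw [add_zero] at hmul
  exact hmul.of_tendsto_div one_ne_zero h

theorem tendsto_const_mul_mul_div (hg' : RegularlyVarying g' a l) {c : ℝ} (hc : 0 < c) :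
    Tendsto (fun x => c * g' (c * x) / g' x) l (𝓝 (c ^ (a + 1))) := by
  simpa only [mul_div_assoc, add_comm a, Real.rpow_add hc, Real.rpow_one] using
    (hg' c hc).const_mul c

theorem of_hasDerivAt_of_tendsto_zero (hg' : RegularlyVarying g' a (𝓝[>] 0))
    (hderiv : ∀ᶠ x in 𝓝[>] 0, HasDerivAt g (g' x) x) (hg : Tendsto g (𝓝[>] 0) (𝓝 0)) :
    RegularlyVarying g (a + 1) (𝓝[>] 0) := fun _ hc =>
  HasDerivAt.lhopital_zero_nhdsGT
    (eventually_hasDerivAt_comp_const_mul hc hderiv) hderiv hg'.eventually_ne_zero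
    (hg.comp (tendsto_const_mul_nhdsGT_zero hc)) hg (hg'.tendsto_const_mul_mul_div hc)

theorem of_hasDerivAt_of_tendsto_atTop (hg' : RegularlyVarying g' a (𝓝[>] 0))
    (hderiv : ∀ᶠ x in 𝓝[>] 0, HasDerivAt g (g' x) x) (hneg : ∀ᶠ x in 𝓝[>] 0, g' x < 0)
    (hg : Tendsto g (𝓝[>] 0) atTop) : RegularlyVarying g (a + 1) (𝓝[>] 0) := fun _ hc =>
  lhopital_atTop_nhdsGT (eventually_hasDerivAt_comp_const_mul hc hderiv) hderiv hneg hg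
    (hg'.tendsto_const_mul_mul_div hc)

end RegularlyVarying

section AntitoneLimits

variable {ι α β : Type*} {l : Filter ι} [LinearOrder α] [TopologicalSpace α] [OrderTopology α]
  [DenselyOrdered α] [NoMinOrder α] [NoMaxOrder α] [LinearOrder β] [TopologicalSpace β]
  [OrderTopology β] {s : Set α} {f : ι → α → β} {F : α → β} {y : ι → α} {x : α}

theorem tendsto_apply_of_antitoneOn (hf : ∀ᶠ i in l, AntitoneOn (f i) s)
    (hlim : ∀ a ∈ s, Tendsto (fun i => f i a) l (𝓝 (F a))) (hs : s ∈ 𝓝 x)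
    (hF : ContinuousAt F x) (hy : Tendsto y l (𝓝 x)) :
    Tendsto (fun i => f i (y i)) l (𝓝 (F x)) := by
  refine tendsto_order.2 ⟨fun c hc => ?_, fun c hc => ?_⟩
  · obtain ⟨a, hxa, hca, has⟩ := ((hF.eventually_const_lt hc).and hs).exists_gt
    filter_upwards [hf, hy hs, hy.eventually_lt_const hxa, (hlim a has).eventually_const_lt hca]
      with i hfi hys hya hci using hci.trans_le (hfi hys has hya.le)
  · obtain ⟨a, hax, hac, has⟩ := ((hF.eventually_lt_const hc).and hs).exists_lt
    filter_upwards [hf, hy hs, hy.eventually_const_lt hax, (hlim a has).eventually_lt_const hac]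
      with i hfi hys hay hci using (hfi has hys hay.le).trans_lt hci

theorem tendsto_of_tendsto_apply_of_antitoneOn (hf : ∀ᶠ i in l, AntitoneOn (f i) s)
    (hlim : ∀ a ∈ s, Tendsto (fun i => f i a) l (𝓝 (F a))) (hs : s ∈ 𝓝 x)
    (hF : StrictAntiOn F s) (hys : ∀ᶠ i in l, y i ∈ s)
    (hy : Tendsto (fun i => f i (y i)) l (𝓝 (F x))) : Tendsto y l (𝓝 x) := by
  have hxs := mem_of_mem_nhds hs
  refine tendsto_order.2 ⟨fun c hc => ?_, fun c hc => ?_⟩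
  · obtain ⟨a, hax, hca, has⟩ := ((eventually_gt_nhds hc).and hs).exists_lt
    filter_upwards [hf, hys, hy.eventually_lt (hlim a has) (hF has hxs hax)] with i hfi hyi hlt
    exact lt_of_not_ge fun hle => hlt.not_ge (hfi hyi has (hle.trans hca.le))
  · obtain ⟨a, hxa, hac, has⟩ := ((eventually_lt_nhds hc).and hs).exists_gt
    filter_upwards [hf, hys, (hlim a has).eventually_lt hy (hF hxs has hxa)] with i hfi hyi hlt
    exact lt_of_not_ge fun hle => hlt.not_ge (hfi has hyi (hac.le.trans hle))

end AntitoneLimits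

theorem eventually_antitoneOn_mul_div {ι : Type*} {l : Filter ι} {G : ℝ → ℝ} {m : ι → ℝ}
    (hanti : AntitoneOn G (Ioi 0)) (htop : Tendsto G (𝓝[>] 0) atTop)
    (hm : Tendsto m l (𝓝[>] 0)) :
    ∀ᶠ i in l, AntitoneOn (fun a => G (a * m i) / G (m i)) (Ioi 0) := by
  filter_upwards [hm.eventually self_mem_nhdsWithin, hm.eventually (htop.eventually_ge_atTop 0)]
    with i hmi hGi a ha b hb hab
  exact div_le_div_of_nonneg_right
    (hanti (mul_pos ha hmi) (mul_pos hb hmi) (mul_le_mul_of_nonneg_right hab (le_of_lt hmi))) hGi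

namespace RegularlyVarying

variable {ι : Type*} {l : Filter ι} {G : ℝ → ℝ} {κ c K : ℝ} {m x y : ι → ℝ}

theorem tendsto_apply_mul_div (hG : RegularlyVarying G (-κ) (𝓝[>] 0)) (hanti : AntitoneOn G (Ioi 0))
    (htop : Tendsto G (𝓝[>] 0) atTop) (hm : Tendsto m l (𝓝[>] 0)) (hc : 0 < c)
    (hx : Tendsto x l (𝓝 c)) : Tendsto (fun i => G (x i * m i) / G (m i)) l (𝓝 (c ^ (-κ))) :=
  tendsto_apply_of_antitoneOn (f := fun i a => G (a * m i) / G (m i)) (F := fun a => a ^ (-κ))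
    (eventually_antitoneOn_mul_div hanti htop hm)
    (fun a ha => (hG a ha).comp hm) (Ioi_mem_nhds hc)
    (Real.continuousAt_rpow_const c (-κ) (Or.inl hc.ne')) hx

theorem tendsto_of_tendsto_apply_mul_div (hG : RegularlyVarying G (-κ) (𝓝[>] 0)) (hκ : 0 < κ)
    (hanti : AntitoneOn G (Ioi 0)) (htop : Tendsto G (𝓝[>] 0) atTop) (hm : Tendsto m l (𝓝[>] 0))
    (hc : 0 < c) (hy : ∀ᶠ i in l, 0 < y i)
    (hlim : Tendsto (fun i => G (y i * m i) / G (m i)) l (𝓝 (c ^ (-κ)))) : Tendsto y l (𝓝 c) :=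
  tendsto_of_tendsto_apply_of_antitoneOn (F := fun a => a ^ (-κ))
    (eventually_antitoneOn_mul_div hanti htop hm)
    (fun a ha => (hG a ha).comp hm) (Ioi_mem_nhds hc)
    (fun _ ha _ _ hab => Real.rpow_lt_rpow_of_neg ha hab (neg_lt_zero.2 hκ)) hy hlim

theorem tendsto_of_apply_mul_eq_add (hG : RegularlyVarying G (-κ) (𝓝[>] 0)) (hκ : 0 < κ)
    (hanti : AntitoneOn G (Ioi 0)) (htop : Tendsto G (𝓝[>] 0) atTop) (hm : Tendsto m l (𝓝[>] 0))
    (hc : 0 < c) (hx : Tendsto x l (𝓝 c)) (hy : ∀ᶠ i in l, 0 < y i)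
    (hadd : ∀ᶠ i in l, G (y i * m i) = G (x i * m i) + G (m i) - K) :
    Tendsto y l (𝓝 ((1 + c ^ (-κ)) ^ (-(1 / κ)))) := by
  have hpos : 0 < 1 + c ^ (-κ) := by positivity
  have hGm : Tendsto (fun i => G (m i)) l atTop := htop.comp hm
  refine hG.tendsto_of_tendsto_apply_mul_div hκ hanti htop hm (Real.rpow_pos_of_pos hpos _) hy ?_
  have hinv : ((1 + c ^ (-κ)) ^ (-(1 / κ))) ^ (-κ) = 1 + c ^ (-κ) := by
    rw [← Real.rpow_mul hpos.le, neg_mul_neg, one_div_mul_cancel hκ.ne', Real.rpow_one]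
  have hlim : Tendsto (fun i => G (x i * m i) / G (m i) + 1 - K / G (m i)) l
      (𝓝 (c ^ (-κ) + 1 - 0)) :=
    ((hG.tendsto_apply_mul_div hanti htop hm hc hx).add_const 1).sub (hGm.const_div_atTop K)
  rw [hinv, add_comm 1, ← sub_zero (c ^ (-κ) + 1)]
  refine hlim.congr' ?_
  filter_upwards [hadd, hGm.eventually_ne_atTop 0] with i hi hne
  rw [hi, sub_div, add_div, div_self hne]

end RegularlyVarying

namespace RegularlyVarying

variable {U : ℝ → ℝ} {a b : ℝ}

theorem eventually_apply_two_pow_mul_le (hU : RegularlyVarying U a atTop) (hU0 : ∀ x, 0 ≤ U x)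
    (hab : a < b) : ∀ᶠ x in atTop, ∀ n : ℕ, U (2 ^ n * x) ≤ ((2 : ℝ) ^ n) ^ b * U x := by
  have hdouble : ∀ᶠ x in atTop, U (2 * x) ≤ 2 ^ b * U x := by
    filter_upwards [(hU 2 two_pos).eventually_lt_const
      (Real.rpow_lt_rpow_of_exponent_lt one_lt_two hab), hU.eventually_ne_zero] with x hx hne
    exact ((div_lt_iff₀ ((hU0 x).lt_of_ne' hne)).1 hx).le
  obtain ⟨X, hX⟩ := eventually_atTop.1 hdouble
  filter_upwards [eventually_ge_atTop X, eventually_ge_atTop 0] with x hx hx0 n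
  induction n with
  | zero => simp
  | succ n ih =>
    have hXn : X ≤ 2 ^ n * x := hx.trans (le_mul_of_one_le_left hx0 (one_le_pow₀ one_le_two))
    calc U (2 ^ (n + 1) * x) = U (2 * (2 ^ n * x)) := by rw [pow_succ', mul_assoc]
      _ ≤ 2 ^ b * U (2 ^ n * x) := hX _ hXn
      _ ≤ 2 ^ b * (((2 : ℝ) ^ n) ^ b * U x) := by gcongr
      _ = ((2 : ℝ) ^ (n + 1)) ^ b * U x := by
        rw [pow_succ', Real.mul_rpow zero_le_two (by positivity), mul_assoc]

-- Potter's bound; the factor `2` comes from comparing `z` with a dyadic number.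
theorem eventually_apply_mul_le (hU : RegularlyVarying U a atTop) (hmono : Monotone U)
    (hU0 : ∀ x, 0 ≤ U x) (hab : a < b) (hb : 0 ≤ b) :
    ∀ᶠ x in atTop, ∀ z, 1 ≤ z → U (z * x) ≤ (2 * z) ^ b * U x := by
  filter_upwards [hU.eventually_apply_two_pow_mul_le hU0 hab, eventually_ge_atTop 0]
    with x hx hx0 z hz
  obtain ⟨n, hnz, hzn⟩ := exists_nat_pow_near hz one_lt_two
  have hU0x := hU0 x
  calc U (z * x) ≤ U (2 ^ (n + 1) * x) := hmono (by gcongr)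
    _ ≤ ((2 : ℝ) ^ (n + 1)) ^ b * U x := hx (n + 1)
    _ ≤ (2 * z) ^ b * U x := by rw [pow_succ']; gcongr

theorem tendsto_integral_exp_neg_mul_div (hU : RegularlyVarying U a atTop) (hmono : Monotone U)
    (hU0 : ∀ x, 0 ≤ U x) (ha : 0 ≤ a) :
    Tendsto (fun x => (∫ z in Ioi 0, Real.exp (-z) * U (z * x)) / U x) atTop
      (𝓝 (Real.Gamma (a + 1))) := by
  have hbound : IntegrableOn (fun z : ℝ => Real.exp (-z) * (1 + (2 * z) ^ (a + 1))) (Ioi 0) := by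
    have h := (integrableOn_exp_neg_Ioi 0).add
      ((Real.GammaIntegral_convergent (s := a + 2) (by linarith)).const_mul (2 ^ (a + 1)))
    refine h.congr_fun (fun z hz => ?_) measurableSet_Ioi
    simp only [Pi.add_apply]
    rw [Real.mul_rpow zero_le_two (le_of_lt hz), show a + 2 - 1 = a + 1 by ring]
    ring
  have hGamma : Real.Gamma (a + 1) = ∫ z in Ioi 0, Real.exp (-z) * z ^ a := by
    rw [Real.Gamma_eq_integral (by linarith), add_sub_cancel_right]
  simp_rw [hGamma, ← integral_div, mul_div_assoc]
  refine tendsto_integral_filter_of_dominated_convergence _ ?_ ?_ hbound ?_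
  · exact Eventually.of_forall fun x => (Real.continuous_exp.measurable.comp measurable_neg |>.mul
      ((hmono.measurable.comp (measurable_id.mul_const x)).div_const _)).aestronglyMeasurable
  · filter_upwards [hU.eventually_apply_mul_le hmono hU0 (lt_add_one a) (by linarith),
      hU.eventually_ne_zero, eventually_ge_atTop 0] with x hx hne hx0
    have hUx : 0 < U x := (hU0 x).lt_of_ne' hne
    filter_upwards [ae_restrict_mem measurableSet_Ioi] with z (hz : 0 < z)
    rw [Real.norm_of_nonneg (mul_nonneg (Real.exp_nonneg _) (div_nonneg (hU0 _) hUx.le))]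
    refine mul_le_mul_of_nonneg_left ((div_le_iff₀ hUx).2 ?_) (Real.exp_nonneg _)
    rw [add_mul, one_mul]
    rcases le_total z 1 with hz1 | hz1
    · exact (hmono (mul_le_of_le_one_left hx0 hz1)).trans
        (le_add_of_nonneg_right (mul_nonneg (by positivity) hUx.le))
    · exact (hx z hz1).trans (le_add_of_nonneg_left hUx.le)
  · filter_upwards [ae_restrict_mem measurableSet_Ioi] with z hz using (hU z hz).const_mul _

end RegularlyVarying

/-! ### Laplace exponents -/

/-- The Laplace exponent `q ↦ ∫_{(0,∞)} (1 - e^{-qx}) μ(dx)` of a measure on `(0,∞)`; mass on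
`(-∞,0]` is ignored. -/
def laplaceExponent (μ : Measure ℝ) (q : ℝ) : ℝ := ∫ x in Ioi 0, (1 - Real.exp (-(q * x))) ∂μ

/-- The truncated first moment `x ↦ ∫_{(0,x]} y μ(dy)`, whose regular variation at infinity controls
the Laplace exponent near zero. -/
def truncatedMean (μ : Measure ℝ) (x : ℝ) : ℝ := ∫ y in Ioc 0 x, y ∂μ

theorem one_sub_exp_neg_nonneg {a : ℝ} (ha : 0 ≤ a) : 0 ≤ 1 - Real.exp (-a) :=
  sub_nonneg.2 (Real.exp_le_one_iff.2 (neg_nonpos.2 ha))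

theorem norm_one_sub_exp_neg_le_one {a : ℝ} (ha : 0 ≤ a) : ‖1 - Real.exp (-a)‖ ≤ 1 := by
  rw [Real.norm_of_nonneg (one_sub_exp_neg_nonneg ha)]
  exact sub_le_self 1 (Real.exp_nonneg _)

section LaplaceExponent

variable (μ : Measure ℝ)

theorem truncatedMean_nonneg (x : ℝ) : 0 ≤ truncatedMean μ x :=
  setIntegral_nonneg measurableSet_Ioc fun _ hy => hy.1.le

theorem ae_norm_one_sub_exp_neg_mul_le_one {q : ℝ} (hq : 0 ≤ q) :
    ∀ᵐ x ∂(μ.restrict (Ioi 0)), ‖1 - Real.exp (-(q * x))‖ ≤ 1 := by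
  filter_upwards [ae_restrict_mem measurableSet_Ioi] with x hx
  exact norm_one_sub_exp_neg_le_one (mul_nonneg hq (le_of_lt hx))

variable [IsFiniteMeasure μ]

theorem monotone_truncatedMean : Monotone (truncatedMean μ) := fun a b hab => by
  have hint : IntegrableOn (fun y : ℝ => y) (Ioc 0 b) μ := by
    refine Measure.integrableOn_of_bounded (M := b) (measure_ne_top _ _) (by fun_prop) ?_
    filter_upwards [ae_restrict_mem measurableSet_Ioc] with y hy
    rw [Real.norm_of_nonneg hy.1.le]
    exact hy.2
  refine setIntegral_mono_set hint ?_ (Ioc_subset_Ioc_right hab).eventuallyLE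
  filter_upwards [ae_restrict_mem measurableSet_Ioc] with y hy using hy.1.le

theorem integrableOn_one_sub_exp_neg_mul {q : ℝ} (hq : 0 ≤ q) :
    IntegrableOn (fun x => 1 - Real.exp (-(q * x))) (Ioi 0) μ :=
  Integrable.mono' (integrable_const 1) (by fun_prop) (ae_norm_one_sub_exp_neg_mul_le_one μ hq)

theorem laplaceExponent_pos (hμ : μ (Ioi 0) ≠ 0) {q : ℝ} (hq : 0 < q) :
    0 < laplaceExponent μ q := by
  have hpos : ∀ x ∈ Ioi (0 : ℝ), 0 < 1 - Real.exp (-(q * x)) := fun x hx =>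
    sub_pos.2 (Real.exp_lt_one_iff.2 (neg_lt_zero.2 (mul_pos hq hx)))
  rw [laplaceExponent, setIntegral_pos_iff_support_of_nonneg_ae _
    (integrableOn_one_sub_exp_neg_mul μ hq.le),
    inter_eq_right.2 fun x hx => Function.mem_support.2 (hpos x hx).ne']
  · exact pos_iff_ne_zero.2 hμ
  · filter_upwards [ae_restrict_mem measurableSet_Ioi] with x hx using (hpos x hx).le

theorem monotoneOn_laplaceExponent : MonotoneOn (laplaceExponent μ) (Ici 0) :=
  fun q hq r hr hqr => setIntegral_mono_on (integrableOn_one_sub_exp_neg_mul μ hq)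
    (integrableOn_one_sub_exp_neg_mul μ hr) measurableSet_Ioi fun x hx => by
      have hx0 : 0 ≤ x := le_of_lt hx
      gcongr

theorem tendsto_laplaceExponent_zero : Tendsto (laplaceExponent μ) (𝓝[>] 0) (𝓝 0) := by
  have h : Tendsto (laplaceExponent μ) (𝓝[>] 0) (𝓝 (∫ _ in Ioi (0 : ℝ), (0 : ℝ) ∂μ)) := by
    refine tendsto_integral_filter_of_dominated_convergence (fun _ => 1)
      (Eventually.of_forall fun q => by fun_prop) ?_ (integrable_const _) (ae_of_all _ fun x => ?_)
    · filter_upwards [self_mem_nhdsWithin] with q hq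
      exact ae_norm_one_sub_exp_neg_mul_le_one μ (le_of_lt hq)
    · have hcont : Continuous fun q : ℝ => 1 - Real.exp (-(q * x)) := by fun_prop
      simpa using (hcont.tendsto 0).mono_left nhdsWithin_le_nhds
  simpa using h

theorem tendsto_laplaceExponent_atTop :
    Tendsto (laplaceExponent μ) atTop (𝓝 (μ (Ioi 0)).toReal) := by
  have h : Tendsto (laplaceExponent μ) atTop (𝓝 (∫ _ in Ioi (0 : ℝ), (1 : ℝ) ∂μ)) := by
    refine tendsto_integral_filter_of_dominated_convergence (fun _ => 1)
      (Eventually.of_forall fun q => by fun_prop) ?_ (integrable_const _) ?_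
    · filter_upwards [eventually_ge_atTop 0] with q hq
        using ae_norm_one_sub_exp_neg_mul_le_one μ hq
    · filter_upwards [ae_restrict_mem measurableSet_Ioi] with x hx
      simpa using (Real.tendsto_exp_neg_atTop_nhds_zero.comp
        (tendsto_id.atTop_mul_const hx)).const_sub 1
  simpa [Measure.real] using h

theorem hasDerivAt_laplaceExponent {q : ℝ} (hq : 0 < q) :
    HasDerivAt (laplaceExponent μ) (∫ y in Ioi 0, y * Real.exp (-(q * y)) ∂μ) q := by
  have hint : ∀ r < 0, Integrable (fun x => Real.exp (r * x)) (μ.restrict (Ioi 0)) := by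
    refine fun r hr =>  ((integrable_const (1 : ℝ)).sub
      (integrableOn_one_sub_exp_neg_mul μ (neg_pos.2 hr).le)).congr (ae_of_all _ fun x => ?_)
    simp
  have hmem : -q ∈ interior (ProbabilityTheory.integrableExpSet id (μ.restrict (Ioi 0))) :=
    interior_maximal hint isOpen_Iio (neg_lt_zero.2 hq)
  have hmgf := ((ProbabilityTheory.hasDerivAt_mgf hmem).comp q (hasDerivAt_neg q)).const_sub
    ((μ.restrict (Ioi 0)).real univ)
  refine (hmgf.congr_deriv (by simp)).congr_of_eventuallyEq ?_
  filter_upwards [lt_mem_nhds hq] with r hr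
  have hintr : Integrable (fun x => Real.exp (-(r * x))) (μ.restrict (Ioi 0)) := by
    simpa using hint (-r) (neg_lt_zero.2 hr)
  rw [laplaceExponent, integral_sub (integrable_const 1) hintr]
  simp [ProbabilityTheory.mgf]

theorem continuousOn_laplaceExponent : ContinuousOn (laplaceExponent μ) (Ioi 0) := fun _ hq =>
  (hasDerivAt_laplaceExponent μ hq).continuousAt.continuousWithinAt

theorem integrable_indicator_mul_exp_neg {x : ℝ} (hx : 0 ≤ x) :
    Integrable ({p : ℝ × ℝ | p.1 ≤ p.2 * x}.indicator fun p => p.1 * Real.exp (-p.2))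
      ((μ.restrict (Ioi 0)).prod (volume.restrict (Ioi 0))) := by
  have hs : MeasurableSet {p : ℝ × ℝ | p.1 ≤ p.2 * x} :=
    measurableSet_le (by fun_prop) (by fun_prop)
  have hint : IntegrableOn (fun z : ℝ => z * x * Real.exp (-z)) (Ioi 0) := by
    refine ((Real.GammaIntegral_convergent two_pos).const_mul x).congr (ae_of_all _ fun z => ?_)
    simp only [show (2 : ℝ) - 1 = 1 by norm_num, Real.rpow_one]
    ring
  refine (hint.comp_snd (μ.restrict (Ioi 0))).mono'
    ((Measurable.indicator (by fun_prop) hs).aestronglyMeasurable) ?_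
  rw [Measure.prod_restrict]
  filter_upwards [ae_restrict_mem (measurableSet_Ioi.prod measurableSet_Ioi)]
    with p ⟨(hy : 0 < p.1), (hz : 0 < p.2)⟩
  rw [norm_indicator_eq_indicator_norm]
  refine indicator_apply_le' (fun hp => ?_) fun _ => by positivity
  rw [Real.norm_of_nonneg (by positivity)]
  exact mul_le_mul_of_nonneg_right hp (Real.exp_nonneg _)

theorem integral_mul_exp_neg_eq_integral_truncatedMean {x : ℝ} (hx : 0 < x) :
    ∫ y in Ioi 0, y * Real.exp (-(x⁻¹ * y)) ∂μ
      = ∫ z in Ioi 0, Real.exp (-z) * truncatedMean μ (z * x) := by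
  -- Both sides integrate `y * exp (-z)` over the region `y ≤ z * x`.
  let F : ℝ × ℝ → ℝ := {p : ℝ × ℝ | p.1 ≤ p.2 * x}.indicator fun p => p.1 * Real.exp (-p.2)
  have hFint : Integrable F ((μ.restrict (Ioi 0)).prod (volume.restrict (Ioi 0))) :=
    integrable_indicator_mul_exp_neg μ hx.le
  have hleft : ∀ y ∈ Ioi (0 : ℝ),
      ∫ z in Ioi 0, F (y, z) = y * Real.exp (-(x⁻¹ * y)) := by
    intro y hy
    have hF : (fun z => F (y, z)) = (Ici (x⁻¹ * y)).indicator fun z => y * Real.exp (-z) := by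
      ext z
      simp only [F, indicator_apply, mem_ofPred_eq, mem_Ici, inv_mul_le_iff₀' hx]
    rw [hF, setIntegral_indicator measurableSet_Ici, inter_eq_right.2
      (Ici_subset_Ioi.2 (mul_pos (inv_pos.2 hx) hy)), integral_const_mul,
      integral_Ici_eq_integral_Ioi, integral_exp_neg_Ioi]
  have hright : ∀ z, ∫ y in Ioi 0, F (y, z) ∂μ = Real.exp (-z) * truncatedMean μ (z * x) := by
    intro z
    have hF : (fun y => F (y, z)) = (Iic (z * x)).indicator fun y => y * Real.exp (-z) := rfl
    rw [hF, setIntegral_indicator measurableSet_Iic, Ioi_inter_Iic, integral_mul_const, mul_comm,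
      truncatedMean]
  rw [← setIntegral_congr_fun measurableSet_Ioi hleft,
    integral_integral_swap (f := fun y z => F (y, z)) hFint]
  simp_rw [hright]

end LaplaceExponent

theorem RegularlyVarying.laplaceExponent_of_truncatedMean {μ : Measure ℝ} [IsFiniteMeasure μ]
    {ρ : ℝ} (hμ : RegularlyVarying (truncatedMean μ) (1 - ρ) atTop) (hρ : 0 < ρ ∧ ρ ≤ 1) :
    RegularlyVarying (laplaceExponent μ) ρ (𝓝[>] 0) := by
  have habel : RegularlyVarying (fun x => ∫ z in Ioi 0, Real.exp (-z) * truncatedMean μ (z * x))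
      (1 - ρ) atTop :=
    hμ.of_tendsto_div (Real.Gamma_pos_of_pos (by linarith)).ne'
      (hμ.tendsto_integral_exp_neg_mul_div (monotone_truncatedMean μ) (truncatedMean_nonneg μ)
        (sub_nonneg.2 hρ.2))
  have h := habel.comp_inv.of_hasDerivAt_of_tendsto_zero ?_ (tendsto_laplaceExponent_zero μ)
  · simpa using h
  · filter_upwards [self_mem_nhdsWithin] with q hq
    simpa [← integral_mul_exp_neg_eq_integral_truncatedMean μ (inv_pos.2 hq)] using
      hasDerivAt_laplaceExponent μ hq

/-! ### Continuity theorem for Laplace transforms -/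

section WeakConvergence

variable {ι E E' : Type*} {l : Filter ι}
  [TopologicalSpace E] [MeasurableSpace E] [BorelSpace E]
  [TopologicalSpace E'] [MeasurableSpace E'] [BorelSpace E']

theorem exists_tendsto_probabilityMeasure_of_tendsto_integral [CompactSpace E] [PolishSpace E]
    [l.NeBot] {P : ι → ProbabilityMeasure E} {A : StarSubalgebra ℝ (E →ᵇ ℝ)}
    (hA : (A.map (BoundedContinuousFunction.toContinuousMapStarₐ ℝ)).SeparatesPoints)
    (hP : ∀ g ∈ A, ∃ c, Tendsto (fun i => ∫ x, g x ∂(P i : Measure E)) l (𝓝 c)) :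
    ∃ Q, Tendsto P l (𝓝 Q) := by
  obtain ⟨Q, hQ⟩ := exists_clusterPt_of_compactSpace (map P l)
  obtain ⟨U, hUl, hUQ⟩ := mapClusterPt_iff_ultrafilter.1 hQ
  refine ⟨Q, ProbabilityMeasure.tendsto_of_tight_of_separatesPoints ℝ
    IsTightMeasureSet.of_compactSpace hA fun g hg => ?_⟩
  obtain ⟨c, hc⟩ := hP g hg
  rwa [tendsto_nhds_unique (ProbabilityMeasure.tendsto_iff_forall_integral_tendsto.1 hUQ g)
    (hc.mono_left hUl)]

theorem tendsto_probabilityMeasure_of_tendsto_map [HasOuterApproxClosed E']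
    [l.IsCountablyGenerated] {P : ι → ProbabilityMeasure E} {F : ProbabilityMeasure E} {e : E → E'}
    (he : Topology.IsOpenEmbedding e)
    (h : Tendsto (fun i => (P i).map he.measurableEmbedding.measurable.aemeasurable) l
      (𝓝 (F.map he.measurableEmbedding.measurable.aemeasurable))) :
    Tendsto P l (𝓝 F) := by
  refine tendsto_of_forall_isOpen_le_liminf' fun G hG => ?_
  have hmap (R : ProbabilityMeasure E) : (R.map he.measurableEmbedding.measurable.aemeasurable :
      Measure E') (e '' G) = (R : Measure E) G := by
    rw [ProbabilityMeasure.toMeasure_map, he.measurableEmbedding.map_apply,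
      he.injective.preimage_image]
  simpa only [hmap] using
    ProbabilityMeasure.le_liminf_measure_open_of_tendsto h (he.isOpenMap G hG)

end WeakConvergence

section UnitInterval

open unitInterval

theorem exists_tendsto_probabilityMeasure_of_tendsto_moment {ι : Type*} {l : Filter ι} [l.NeBot]
    {P : ι → ProbabilityMeasure I}
    (hP : ∀ n : ℕ, ∃ c, Tendsto (fun i => ∫ y, (y : ℝ) ^ n ∂(P i : Measure I)) l (𝓝 c)) :
    ∃ Q, Tendsto P l (𝓝 Q) := by
  let coord : I →ᵇ ℝ := .mkOfCompact ⟨Subtype.val, continuous_subtype_val⟩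
  have hstar (f : I →ᵇ ℝ) : star f = f := BoundedContinuousFunction.ext fun _ => star_trivial _
  let A : StarSubalgebra ℝ (I →ᵇ ℝ) :=
    { Algebra.adjoin ℝ {coord} with star_mem' := fun {f} hf => (hstar f).symm ▸ hf }
  have hcoord : coord ∈ A := Algebra.self_mem_adjoin_singleton ℝ coord
  refine exists_tendsto_probabilityMeasure_of_tendsto_integral (A := A) ?_ fun g hg => ?_
  · exact fun x y hxy => ⟨coord, ⟨_, ⟨coord, hcoord, rfl⟩, rfl⟩, Subtype.coe_injective.ne hxy⟩
  obtain ⟨p, rfl⟩ : ∃ p : Polynomial ℝ, p.aeval coord = g := by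
    simpa [Algebra.adjoin_singleton_eq_range_aeval] using
      (show g ∈ Algebra.adjoin ℝ {coord} from hg)
  induction p using Polynomial.induction_on' with
  | add p q hp hq =>
    obtain ⟨a, ha⟩ := hp (Polynomial.aeval_mem_adjoin_singleton ℝ coord)
    obtain ⟨b, hb⟩ := hq (Polynomial.aeval_mem_adjoin_singleton ℝ coord)
    refine ⟨a + b, (ha.add hb).congr fun i => ?_⟩
    rw [← integral_add (BoundedContinuousFunction.integrable _ _)
      (BoundedContinuousFunction.integrable _ _)]
    simp
  | monomial n a =>
    obtain ⟨c, hc⟩ := hP n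
    refine ⟨a * c, (hc.const_mul a).congr fun i => ?_⟩
    rw [← integral_const_mul]
    simp [coord, Polynomial.aeval_monomial]

theorem norm_rpow_le_one (y : I) {q : ℝ} (hq : 0 < q) : ‖(y : ℝ) ^ q‖ ≤ 1 := by
  rw [Real.norm_of_nonneg (Real.rpow_nonneg y.2.1 q)]
  exact Real.rpow_le_one y.2.1 y.2.2 hq.le

theorem tendsto_integral_rpow_nhdsGT_zero (Q : Measure I) [IsFiniteMeasure Q] :
    Tendsto (fun q : ℝ => ∫ y, (y : ℝ) ^ q ∂Q) (𝓝[>] 0) (𝓝 (Q.real {0}ᶜ)) := by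
  rw [← integral_indicator_one (measurableSet_singleton (0 : I)).compl]
  refine tendsto_integral_filter_of_dominated_convergence (fun _ => 1)
    (.of_forall fun q => (measurable_subtype_coe.pow_const q).aestronglyMeasurable)
    (eventually_mem_nhdsWithin.mono fun q hq => .of_forall fun y => norm_rpow_le_one y hq)
    (integrable_const 1) (.of_forall fun y => ?_)
  obtain rfl | hy := eq_or_ne y 0
  · refine tendsto_const_nhds.congr' (eventually_mem_nhdsWithin.mono fun q (hq : 0 < q) => ?_)
    simp [Real.zero_rpow hq.ne']
  · have hy' : (y : ℝ) ≠ 0 := by simpa using hy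
    simpa [hy] using ((Real.continuousAt_const_rpow hy').tendsto (x := 0)).mono_left
      nhdsWithin_le_nhds

theorem tendsto_integral_rpow_atTop (Q : Measure I) [IsFiniteMeasure Q] :
    Tendsto (fun q : ℝ => ∫ y, (y : ℝ) ^ q ∂Q) atTop (𝓝 (Q.real {1})) := by
  rw [← integral_indicator_one (measurableSet_singleton (1 : I))]
  refine tendsto_integral_filter_of_dominated_convergence (fun _ => 1)
    (.of_forall fun q => (measurable_subtype_coe.pow_const q).aestronglyMeasurable)
    ((eventually_gt_atTop 0).mono fun q hq => .of_forall fun y => norm_rpow_le_one y hq)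
    (integrable_const 1) (.of_forall fun y => ?_)
  obtain rfl | hy := eq_or_ne y 1
  · simp
  · have hy' : (y : ℝ) < 1 := lt_of_le_of_ne y.2.2 (by simpa using hy)
    simpa [hy] using tendsto_rpow_atTop_of_base_lt_one (y : ℝ) (by linarith [y.2.1]) hy'

/-- The embedding `x ↦ exp (-x)` of the half-line into the unit interval, which turns Laplace
transforms into moments. -/
def expNeg (x : Ioi (0 : ℝ)) : I :=
  ⟨Real.exp (-x), (Real.exp_pos _).le, Real.exp_le_one_iff.2 (neg_nonpos.2 (le_of_lt x.2))⟩

theorem range_expNeg : range expNeg = {0, 1}ᶜ := by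
  ext y
  simp only [mem_range, mem_compl_iff, mem_insert_iff, mem_singleton_iff, not_or]
  constructor
  · rintro ⟨x, rfl⟩
    exact ⟨fun h => (Real.exp_pos _).ne' (congrArg Subtype.val h),
      fun h => (Real.exp_lt_one_iff.2 (neg_lt_zero.2 x.2)).ne (congrArg Subtype.val h)⟩
  · rintro ⟨h0, h1⟩
    have hy0 : 0 < (y : ℝ) := lt_of_le_of_ne y.2.1 (by simpa [eq_comm] using h0)
    have hy1 : (y : ℝ) < 1 := lt_of_le_of_ne y.2.2 (by simpa using h1)
    exact ⟨⟨-Real.log y, neg_pos.2 (Real.log_neg hy0 hy1)⟩,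
      Subtype.ext (by simp [expNeg, Real.exp_log hy0])⟩

theorem isOpenEmbedding_expNeg : Topology.IsOpenEmbedding expNeg := by
  have hcont : Continuous expNeg := by unfold expNeg; fun_prop
  have hcomp : Topology.IsOpenEmbedding (Subtype.val ∘ expNeg) :=
    Real.isOpenEmbedding_exp.comp
      ((Homeomorph.neg ℝ).isOpenEmbedding.comp isOpen_Ioi.isOpenEmbedding_subtypeVal)
  refine ⟨.of_comp hcont continuous_subtype_val hcomp.isEmbedding, ?_⟩
  rw [range_expNeg]
  exact (Set.toFinite _).isClosed.isOpen_compl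

theorem integral_rpow_map_expNeg (P : ProbabilityMeasure (Ioi (0 : ℝ))) (q : ℝ) :
    ∫ y, (y : ℝ) ^ q ∂(P : Measure (Ioi (0 : ℝ))).map expNeg =
      ∫ x : Ioi (0 : ℝ), Real.exp (-(q * x)) ∂(P : Measure (Ioi (0 : ℝ))) := by
  rw [isOpenEmbedding_expNeg.measurableEmbedding.integral_map]
  simp [expNeg, ← Real.exp_mul, mul_comm]

theorem measure_compl_range_expNeg {Q : ProbabilityMeasure I} {g : ℝ → ℝ}
    (hg0 : Tendsto g (𝓝[>] 0) (𝓝 1)) (hgtop : Tendsto g atTop (𝓝 0))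
    (hQ : ∀ q, 0 < q → ∫ y, (y : ℝ) ^ q ∂(Q : Measure I) = g q) :
    (Q : Measure I) (range expNeg)ᶜ = 0 := by
  have h0 : (Q : Measure I).real {0}ᶜ = 1 := tendsto_nhds_unique
    (tendsto_integral_rpow_nhdsGT_zero Q) (hg0.congr' (eventually_mem_nhdsWithin.mono
      fun q hq => (hQ q hq).symm))
  have h1 : (Q : Measure I).real {1} = 0 := tendsto_nhds_unique
    (tendsto_integral_rpow_atTop Q) (hgtop.congr' ((eventually_gt_atTop 0).mono
      fun q hq => (hQ q hq).symm))
  rw [probReal_compl_eq_one_sub (measurableSet_singleton _), sub_eq_self] at h0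
  rw [measureReal_eq_zero_iff] at h0 h1
  rw [range_expNeg, compl_compl, insert_eq]
  exact measure_union_null h0 h1

theorem exists_tendsto_probabilityMeasure_of_tendsto_laplace {ι : Type*} {l : Filter ι} [l.NeBot]
    [l.IsCountablyGenerated] {P : ι → ProbabilityMeasure (Ioi (0 : ℝ))} {g : ℝ → ℝ}
    (hg0 : Tendsto g (𝓝[>] 0) (𝓝 1)) (hgtop : Tendsto g atTop (𝓝 0))
    (hP : ∀ q, 0 < q → Tendsto (fun i => ∫ x : Ioi (0 : ℝ), Real.exp (-(q * x))
      ∂(P i : Measure (Ioi (0 : ℝ)))) l (𝓝 (g q))) :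
    ∃ F, Tendsto P l (𝓝 F) := by
  have he := isOpenEmbedding_expNeg.measurableEmbedding
  simp only [← integral_rpow_map_expNeg] at hP
  obtain ⟨Q, hQ⟩ := exists_tendsto_probabilityMeasure_of_tendsto_moment (l := l)
      (P := fun i => (P i).map he.measurable.aemeasurable) fun n => by
    obtain rfl | hn := n.eq_zero_or_pos
    · exact ⟨1, by simp [-ProbabilityMeasure.toMeasure_map]⟩
    · exact ⟨g n, by simpa using hP n (Nat.cast_pos.2 hn)⟩
  have hQg (q : ℝ) (hq : 0 < q) : ∫ y, (y : ℝ) ^ q ∂(Q : Measure I) = g q :=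
    tendsto_nhds_unique (ProbabilityMeasure.tendsto_iff_forall_integral_tendsto.1 hQ
      (.mkOfCompact ⟨fun y => (y : ℝ) ^ q,
        (Real.continuous_rpow_const hq.le).comp continuous_subtype_val⟩)) (hP q hq)
  have hQnull := measure_compl_range_expNeg hg0 hgtop hQg
  have hmap : ((Q : Measure I).comap expNeg).map expNeg = Q := by
    rw [he.map_comap]
    exact Measure.restrict_eq_self_of_ae_mem (mem_ae_iff.2 hQnull)
  have hprob : IsProbabilityMeasure ((Q : Measure I).comap expNeg) := by
    refine ⟨?_⟩
    rw [he.comap_apply, image_univ, ← prob_compl_eq_zero_iff he.measurableSet_range, hQnull]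
  refine ⟨⟨_, hprob⟩, tendsto_probabilityMeasure_of_tendsto_map isOpenEmbedding_expNeg ?_⟩
  convert hQ
  exact Subtype.ext hmap

end UnitInterval

/-! ### The flow of `-Ψ` -/

/-- The time the flow `v' = -Ψ(v)` takes to descend from `1` to `v` (negative if `1 < v`). -/
def descentTime (Ψ : ℝ → ℝ) (v : ℝ) : ℝ := ∫ u in v..1, (Ψ u)⁻¹

/-- `φ` is a positive solution of `φ' = -Ψ(φ)` on `(0, ∞)`. -/
def IsFlowLine (Ψ φ : ℝ → ℝ) : Prop := ∀ t, 0 < t → 0 < φ t ∧ HasDerivAt φ (-Ψ (φ t)) t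

section DescentTime

variable {Ψ φ : ℝ → ℝ} {γ : ℝ}

theorem hasDerivAt_descentTime (hcont : ContinuousOn Ψ (Ioi 0)) (hpos : ∀ u, 0 < u → 0 < Ψ u)
    {v : ℝ} (hv : 0 < v) : HasDerivAt (descentTime Ψ) (-(Ψ v)⁻¹) v := by
  have hinv : ContinuousOn (fun u => (Ψ u)⁻¹) (Ioi 0) := hcont.inv₀ fun u hu => (hpos u hu).ne'
  exact intervalIntegral.integral_hasDerivAt_left
    (hinv.mono fun x hx => (lt_min hv one_pos).trans_le hx.1).intervalIntegrable
    (hinv.stronglyMeasurableAtFilter isOpen_Ioi v hv) (hinv.continuousAt (Ioi_mem_nhds hv))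

theorem strictAntiOn_descentTime (hcont : ContinuousOn Ψ (Ioi 0)) (hpos : ∀ u, 0 < u → 0 < Ψ u) :
    StrictAntiOn (descentTime Ψ) (Ioi 0) := by
  refine strictAntiOn_of_hasDerivWithinAt_neg (f' := fun v => -(Ψ v)⁻¹) (convex_Ioi 0)
    (fun v hv => (hasDerivAt_descentTime hcont hpos hv).continuousAt.continuousWithinAt) ?_ ?_
  · rw [interior_Ioi]
    exact fun v hv => (hasDerivAt_descentTime hcont hpos hv).hasDerivWithinAt
  · rw [interior_Ioi]
    exact fun v hv => neg_lt_zero.2 (inv_pos.2 (hpos v hv))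

theorem IsFlowLine.descentTime_eq_add (hφ : IsFlowLine Ψ φ) (hcont : ContinuousOn Ψ (Ioi 0))
    (hpos : ∀ u, 0 < u → 0 < Ψ u) {s t : ℝ} (hs : 0 < s) (ht : 0 < t) :
    descentTime Ψ (φ t) = descentTime Ψ (φ s) + (t - s) := by
  have hderiv (r : ℝ) (hr : 0 < r) : HasDerivAt (fun r => descentTime Ψ (φ r) - r) 0 r := by
    obtain ⟨hφr, hφ'⟩ := hφ r hr
    refine (((hasDerivAt_descentTime hcont hpos hφr).comp r hφ').sub
      (hasDerivAt_id r)).congr_deriv ?_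
    rw [neg_mul_neg, inv_mul_cancel₀ (hpos _ hφr).ne', sub_self]
  have hconst := isOpen_Ioi.is_const_of_deriv_eq_zero isPreconnected_Ioi
    (fun r hr => (hderiv r hr).differentiableAt.differentiableWithinAt)
    (fun r hr => (hderiv r hr).deriv) ht hs
  linarith

theorem IsFlowLine.tendsto_descentTime (hφ : IsFlowLine Ψ φ) (hcont : ContinuousOn Ψ (Ioi 0))
    (hpos : ∀ u, 0 < u → 0 < Ψ u) : Tendsto (fun t => descentTime Ψ (φ t)) atTop atTop := by
  refine (tendsto_atTop_add_const_left _ (descentTime Ψ (φ 1) - 1) tendsto_id).congr'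
    ((eventually_gt_atTop 0).mono fun t ht => ?_)
  linarith [hφ.descentTime_eq_add hcont hpos one_pos ht, id_eq t]

theorem IsFlowLine.tendsto_nhdsGT_zero (hφ : IsFlowLine Ψ φ) (hcont : ContinuousOn Ψ (Ioi 0))
    (hpos : ∀ u, 0 < u → 0 < Ψ u) : Tendsto φ atTop (𝓝[>] 0) := by
  refine (nhdsGT_basis (0 : ℝ)).tendsto_right_iff.2 fun ε hε => ?_
  filter_upwards [(hφ.tendsto_descentTime hcont hpos).eventually_gt_atTop (descentTime Ψ ε),
    eventually_gt_atTop 0] with t hlt ht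
  exact ⟨(hφ t ht).1, ((strictAntiOn_descentTime hcont hpos).lt_iff_gt hε (hφ t ht).1).1 hlt⟩

theorem IsFlowLine.tendsto_descentTime_nhdsGT_zero (hφ : IsFlowLine Ψ φ)
    (hcont : ContinuousOn Ψ (Ioi 0)) (hpos : ∀ u, 0 < u → 0 < Ψ u) :
    Tendsto (descentTime Ψ) (𝓝[>] 0) atTop := by
  refine tendsto_atTop.2 fun b => ?_
  obtain ⟨t, hb, ht⟩ := ((hφ.tendsto_descentTime hcont hpos).eventually_ge_atTop b
    |>.and (eventually_gt_atTop 0)).exists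
  filter_upwards [Ioo_mem_nhdsGT (hφ t ht).1] with v hv
  exact hb.trans ((strictAntiOn_descentTime hcont hpos).antitoneOn hv.1 (hφ t ht).1 hv.2.le)

theorem RegularlyVarying.descentTime (hΨ : RegularlyVarying Ψ γ (𝓝[>] 0))
    (hcont : ContinuousOn Ψ (Ioi 0)) (hpos : ∀ u, 0 < u → 0 < Ψ u)
    (htop : Tendsto (descentTime Ψ) (𝓝[>] 0) atTop) :
    RegularlyVarying (_root_.descentTime Ψ) (-(γ - 1)) (𝓝[>] 0) := by
  rw [neg_sub, sub_eq_neg_add]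
  exact hΨ.inv.neg.of_hasDerivAt_of_tendsto_atTop
    (eventually_mem_nhdsWithin.mono fun v hv => hasDerivAt_descentTime hcont hpos hv)
    (eventually_mem_nhdsWithin.mono fun v hv => neg_lt_zero.2 (inv_pos.2 (hpos v hv))) htop

theorem exists_scaling_of_tendsto {ι : Type*} {l : Filter ι} {f : ℝ → ℝ} {M : ℝ} {m : ι → ℝ}
    (hf : ContinuousOn f (Ioi 0)) (hmono : MonotoneOn f (Ioi 0)) (hpos : ∀ q, 0 < q → 0 < f q)
    (h0 : Tendsto f (𝓝[>] 0) (𝓝 0)) (htop : Tendsto f atTop (𝓝 M)) (hm : Tendsto m l (𝓝[>] 0)) :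
    ∃ lam : ι → ℝ, (∀ i, 0 < lam i) ∧ Tendsto lam l (𝓝[>] 0) ∧ ∀ᶠ i in l, f (lam i) = m i := by
  have hM : 0 < M := (hpos 1 one_pos).trans_le
    (ge_of_tendsto htop ((eventually_ge_atTop 1).mono fun q hq =>
      hmono (mem_Ioi.2 one_pos) (one_pos.trans_le hq) hq))
  have hex (i : ι) : ∃ x, 0 < x ∧ (m i ∈ Ioo 0 M → f x = m i) := by
    by_cases hi : m i ∈ Ioo 0 M
    · obtain ⟨x, hx, hfx⟩ := isPreconnected_Ioi.intermediate_value_Ioo (l₁ := 𝓝[>] (0 : ℝ))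
        inf_le_right (le_principal_iff.2 (Ioi_mem_atTop 0)) hf h0 htop hi
      exact ⟨x, hx, fun _ => hfx⟩
    · exact ⟨1, one_pos, fun h => absurd h hi⟩
  choose lam hlam hflam using hex
  have heq : ∀ᶠ i in l, f (lam i) = m i :=
    (hm.eventually (Ioo_mem_nhdsGT hM)).mono hflam
  refine ⟨lam, hlam, (nhdsGT_basis (0 : ℝ)).tendsto_right_iff.2 fun ε hε => ?_, heq⟩
  filter_upwards [heq, hm.eventually (Ioo_mem_nhdsGT (hpos ε hε))] with i hi hmi
  refine ⟨hlam i, lt_of_not_ge fun hle => hmi.2.not_ge ?_⟩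
  exact hi ▸ hmono hε (hlam i) hle

theorem tendsto_flow_scaled_div {κ ρ t₀ : ℝ} {m lam : ℝ → ℝ} {φ : ℝ → ℝ → ℝ}
    (hΨ : RegularlyVarying Ψ (κ + 1) (𝓝[>] 0)) (hκ : 0 < κ) (hcont : ContinuousOn Ψ (Ioi 0))
    (hpos : ∀ u, 0 < u → 0 < Ψ u) (hm : IsFlowLine Ψ m)
    (hφ : ∀ q, 0 < q → IsFlowLine Ψ (φ · q)) (ht₀ : 0 < t₀)
    (hrv : RegularlyVarying (φ t₀) ρ (𝓝[>] 0)) (hlampos : ∀ t, 0 < lam t)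
    (hlam : Tendsto lam atTop (𝓝[>] 0)) (heq : ∀ᶠ t in atTop, φ t₀ (lam t) = m t)
    {q : ℝ} (hq : 0 < q) :
    Tendsto (fun t => φ t (q * lam t) / m t) atTop
      (𝓝 ((1 + q ^ (-(ρ * κ))) ^ (-(1 / κ)))) := by
  have htop := hm.tendsto_descentTime_nhdsGT_zero hcont hpos
  have hG := hΨ.descentTime hcont hpos htop
  have hx : Tendsto (fun t => φ t₀ (q * lam t) / m t) atTop (𝓝 (q ^ ρ)) :=
    ((hrv q hq).comp hlam).congr' (heq.mono fun t ht => by simp [ht])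
  rw [add_sub_cancel_right] at hG
  rw [← mul_neg, Real.rpow_mul hq.le]
  refine hG.tendsto_of_apply_mul_eq_add hκ (strictAntiOn_descentTime hcont hpos).antitoneOn htop
    (hm.tendsto_nhdsGT_zero hcont hpos) (Real.rpow_pos_of_pos hq ρ) hx ?_
    (K := descentTime Ψ (m t₀)) ?_
  all_goals
    filter_upwards [eventually_gt_atTop 0] with t ht
    have hφt := hφ (q * lam t) (mul_pos hq (hlampos t))
    have hmt := (hm t ht).1
  · exact div_pos (hφt t ht).1 hmt
  · rw [div_mul_cancel₀ _ hmt.ne', div_mul_cancel₀ _ hmt.ne']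
    linarith [hφt.descentTime_eq_add hcont hpos ht₀ ht, hm.descentTime_eq_add hcont hpos ht₀ ht]

end DescentTime

/-! ### Branching mechanisms -/

/-- The critical branching mechanism with Gaussian coefficient `β` and jump measure `π`. -/
def branchingMechanism (β : ℝ) (π : Measure ℝ) (u : ℝ) : ℝ :=
  β * u ^ 2 + ∫ x in Ioi (0 : ℝ), (Real.exp (-(u * x)) - 1 + u * x) ∂π

theorem exp_neg_sub_one_add_nonneg (a : ℝ) : 0 ≤ Real.exp (-a) - 1 + a := by
  linarith [Real.add_one_le_exp (-a)]

theorem exp_neg_sub_one_add_pos {a : ℝ} (ha : a ≠ 0) : 0 < Real.exp (-a) - 1 + a := by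
  linarith [Real.add_one_lt_exp (neg_ne_zero.2 ha)]

theorem exp_neg_sub_one_add_le_self {a : ℝ} (ha : 0 ≤ a) : Real.exp (-a) - 1 + a ≤ a := by
  linarith [Real.exp_le_one_iff.2 (neg_nonpos.2 ha)]

theorem exp_neg_sub_one_add_le_sq {a : ℝ} (ha : 0 ≤ a) : Real.exp (-a) - 1 + a ≤ a ^ 2 := by
  have hexp : Real.exp (-a) * (1 + a) ≤ 1 := by
    calc Real.exp (-a) * (1 + a) ≤ Real.exp (-a) * Real.exp a := by
          gcongr
          linarith [Real.add_one_le_exp a]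
      _ = 1 := by rw [← Real.exp_add, neg_add_cancel, Real.exp_zero]
  nlinarith [exp_neg_sub_one_add_nonneg a]

theorem norm_exp_neg_mul_sub_one_add_le {u b x : ℝ} (hu : 0 ≤ u) (hub : u ≤ b) (hx : 0 ≤ x) :
    ‖Real.exp (-(u * x)) - 1 + u * x‖ ≤ (b + b ^ 2) * min x (x ^ 2) := by
  rw [Real.norm_of_nonneg (exp_neg_sub_one_add_nonneg _)]
  have hb : 0 ≤ b := hu.trans hub
  have hux : u * x ≤ b * x := by gcongr
  obtain h | h := le_total x (x ^ 2)
  · rw [min_eq_left h]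
    linarith [exp_neg_sub_one_add_le_self (mul_nonneg hu hx), mul_nonneg (sq_nonneg b) hx]
  · rw [min_eq_right h]
    have hsq : (u * x) ^ 2 ≤ (b * x) ^ 2 := by gcongr
    linarith [exp_neg_sub_one_add_le_sq (mul_nonneg hu hx), mul_nonneg hb (sq_nonneg x),
      mul_pow b x 2]

section BranchingMechanism

variable {β : ℝ} {π : Measure ℝ}

theorem integrableOn_min_self_sq
    (hπ : ∫⁻ x in Ioi (0 : ℝ), ENNReal.ofReal (min x (x ^ 2)) ∂π < ⊤) :
    IntegrableOn (fun x => min x (x ^ 2)) (Ioi 0) π := by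
  refine ⟨by fun_prop, (hasFiniteIntegral_iff_ofReal ?_).2 hπ⟩
  filter_upwards [ae_restrict_mem measurableSet_Ioi] with x hx
  exact le_min (le_of_lt hx) (sq_nonneg x)

theorem ae_norm_exp_neg_mul_sub_one_add_le {u b : ℝ} (hu : 0 ≤ u) (hub : u ≤ b) :
    ∀ᵐ x ∂π.restrict (Ioi 0),
      ‖Real.exp (-(u * x)) - 1 + u * x‖ ≤ (b + b ^ 2) * min x (x ^ 2) :=
  ae_restrict_of_forall_mem measurableSet_Ioi fun _ hx =>
    norm_exp_neg_mul_sub_one_add_le hu hub (le_of_lt hx)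

theorem integrableOn_exp_neg_mul_sub_one_add
    (hπ : ∫⁻ x in Ioi (0 : ℝ), ENNReal.ofReal (min x (x ^ 2)) ∂π < ⊤) {u : ℝ} (hu : 0 ≤ u) :
    IntegrableOn (fun x => Real.exp (-(u * x)) - 1 + u * x) (Ioi 0) π :=
  ((integrableOn_min_self_sq hπ).const_mul (u + u ^ 2)).mono' (by fun_prop)
    (ae_norm_exp_neg_mul_sub_one_add_le hu le_rfl)

theorem continuousOn_branchingMechanism
    (hπ : ∫⁻ x in Ioi (0 : ℝ), ENNReal.ofReal (min x (x ^ 2)) ∂π < ⊤) :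
    ContinuousOn (branchingMechanism β π) (Ioi 0) := by
  refine fun u (hu : 0 < u) => ContinuousAt.continuousWithinAt (.add (by fun_prop) ?_)
  refine continuousAt_of_dominated (.of_forall fun v => by fun_prop) ?_
    ((integrableOn_min_self_sq hπ).const_mul (u + 1 + (u + 1) ^ 2))
    (.of_forall fun x => by fun_prop)
  filter_upwards [Ioo_mem_nhds hu (lt_add_one u)] with v hv
  exact ae_norm_exp_neg_mul_sub_one_add_le hv.1.le hv.2.le

theorem integral_exp_neg_mul_sub_one_add_nonneg (π : Measure ℝ) (u : ℝ) :
    0 ≤ ∫ x in Ioi (0 : ℝ), (Real.exp (-(u * x)) - 1 + u * x) ∂π :=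
  integral_nonneg fun _ => exp_neg_sub_one_add_nonneg _

theorem measure_Ioi_eq_zero_of_integral_exp_neg_mul_sub_one_add_eq_zero
    (hπ : ∫⁻ x in Ioi (0 : ℝ), ENNReal.ofReal (min x (x ^ 2)) ∂π < ⊤) {u : ℝ} (hu : 0 < u)
    (h : ∫ x in Ioi (0 : ℝ), (Real.exp (-(u * x)) - 1 + u * x) ∂π = 0) : π (Ioi 0) = 0 := by
  rw [integral_eq_zero_iff_of_nonneg (fun _ => exp_neg_sub_one_add_nonneg _)
    (integrableOn_exp_neg_mul_sub_one_add hπ hu.le)] at h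
  rw [← Measure.restrict_eq_zero, ← ae_eq_bot, ← eventually_false_iff_eq_bot]
  filter_upwards [h, ae_restrict_mem measurableSet_Ioi] with x hx (hx0 : 0 < x)
  exact (exp_neg_sub_one_add_pos (mul_pos hu hx0).ne').ne' hx

theorem branchingMechanism_pos (hβ : 0 ≤ β)
    (hπ : ∫⁻ x in Ioi (0 : ℝ), ENNReal.ofReal (min x (x ^ 2)) ∂π < ⊤) {v : ℝ}
    (hv : branchingMechanism β π v ≠ 0) {u : ℝ} (hu : 0 < u) : 0 < branchingMechanism β π u := by
  have hsq : 0 ≤ β * u ^ 2 := mul_nonneg hβ (sq_nonneg u)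
  have hint := integral_exp_neg_mul_sub_one_add_nonneg π u
  refine (add_nonneg hsq hint).lt_of_ne' fun h => hv ?_
  obtain ⟨hβu, hπu⟩ := (add_eq_zero_iff_of_nonneg hsq hint).1 h
  have hβ0 : β = 0 := (mul_eq_zero.1 hβu).resolve_right (pow_pos hu 2).ne'
  have hπ0 := measure_Ioi_eq_zero_of_integral_exp_neg_mul_sub_one_add_eq_zero hπ hu hπu
  rw [branchingMechanism, hβ0, Measure.restrict_eq_zero.2 hπ0, zero_mul, integral_zero_measure,
    add_zero]

theorem RegularlyVarying.pos_of_eqOn_branchingMechanism {Ψ : ℝ → ℝ} {γ : ℝ}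
    (hΨ : RegularlyVarying Ψ γ (𝓝[>] 0)) (hβ : 0 ≤ β)
    (hπ : ∫⁻ x in Ioi (0 : ℝ), ENNReal.ofReal (min x (x ^ 2)) ∂π < ⊤)
    (heq : EqOn Ψ (branchingMechanism β π) (Ioi 0)) {u : ℝ} (hu : 0 < u) : 0 < Ψ u := by
  obtain ⟨v, hΨv, hv⟩ := (hΨ.eventually_ne_zero.and self_mem_nhdsWithin).exists
  rw [heq hv] at hΨv
  exact (branchingMechanism_pos hβ hπ hΨv hu).trans_eq (heq hu).symm

end BranchingMechanism

/-! ### Weak limits of rescaled measures -/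

section Rescaling

theorem exists_probabilityMeasure_integral_eq (μ : Measure ℝ) [IsFiniteMeasure μ]
    (hμ : μ (Ioi 0) ≠ 0) {c : ℝ} (hc : 0 < c) :
    ∃ P : ProbabilityMeasure (Ioi (0 : ℝ)), ∀ f : ℝ → ℝ, ∫ x : Ioi (0 : ℝ), f x ∂(P : Measure _) =
      (μ (Ioi 0)).toReal⁻¹ * ∫ x in Ioi 0, f (c * x) ∂μ := by
  have he : MeasurableEmbedding (c * ·) := (Homeomorph.mulLeft₀ c hc.ne').measurableEmbedding
  have hpre : (c * ·) ⁻¹' Ioi 0 = Ioi (0 : ℝ) := by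
    ext x
    exact mul_pos_iff_of_pos_left hc
  let P : Measure ℝ := (μ (Ioi 0))⁻¹ • μ.map (c * ·)
  have hP : IsProbabilityMeasure (P.comap ((↑) : Ioi (0 : ℝ) → ℝ)) := by
    refine ⟨?_⟩
    rw [comap_subtype_coe_apply measurableSet_Ioi, image_univ, Subtype.range_coe]
    simp [P, he.map_apply, hpre, ENNReal.inv_mul_cancel hμ (measure_ne_top _ _)]
  refine ⟨⟨_, hP⟩, fun f => ?_⟩
  rw [ProbabilityMeasure.coe_mk, integral_subtype_comap measurableSet_Ioi, Measure.restrict_smul,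
    integral_smul_measure, he.setIntegral_map, hpre, ENNReal.toReal_inv, smul_eq_mul]

theorem integral_exp_neg_mul_eq_one_sub (P : Measure (Ioi (0 : ℝ))) [IsProbabilityMeasure P]
    {q : ℝ} (hq : 0 < q) :
    ∫ x : Ioi (0 : ℝ), Real.exp (-(q * x)) ∂P =
      1 - ∫ x : Ioi (0 : ℝ), (1 - Real.exp (-(q * x))) ∂P := by
  have hint : Integrable (fun x : Ioi (0 : ℝ) => Real.exp (-(q * x))) P :=
    .of_bound (by fun_prop) 1 (.of_forall fun x => by simpa using (mul_pos hq x.2).le)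
  rw [integral_sub (integrable_const 1) hint]
  simp

variable {ι : Type*} {l : Filter ι} {P : ι → ProbabilityMeasure (Ioi (0 : ℝ))}
  {F : ProbabilityMeasure (Ioi (0 : ℝ))}

theorem tendsto_integral_of_tendsto_probabilityMeasure_Ioi (h : Tendsto P l (𝓝 F)) {f : ℝ → ℝ}
    (hf : ContinuousOn f (Ioi 0)) (hbdd : ∃ M, ∀ x ∈ Ioi (0 : ℝ), |f x| ≤ M) :
    Tendsto (fun i => ∫ x : Ioi (0 : ℝ), f x ∂(P i : Measure (Ioi (0 : ℝ)))) l
      (𝓝 (∫ x in Ioi 0, f x ∂(F : Measure (Ioi (0 : ℝ))).map (↑))) := by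
  obtain ⟨M, hM⟩ := hbdd
  have hval := MeasurableEmbedding.subtype_coe (measurableSet_Ioi (a := (0 : ℝ)))
  rw [hval.setIntegral_map, Subtype.coe_preimage_self, setIntegral_univ]
  exact ProbabilityMeasure.tendsto_iff_forall_integral_tendsto.1 h
    (.ofNormedAddCommGroup _ hf.domRestrict M fun x => hM x x.2)

theorem exists_weak_limit_of_tendsto_laplaceExponent_div [l.NeBot] [l.IsCountablyGenerated]
    {μ : ι → Measure ℝ} [∀ i, IsFiniteMeasure (μ i)] (hμ : ∀ i, μ i (Ioi 0) ≠ 0) {c : ι → ℝ}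
    (hc : ∀ i, 0 < c i) {g : ℝ → ℝ} (hg0 : Tendsto g (𝓝[>] 0) (𝓝 0)) (hg1 : Tendsto g atTop (𝓝 1))
    (hlim : ∀ q, 0 < q →
      Tendsto (fun i => laplaceExponent (μ i) (q * c i) / (μ i (Ioi 0)).toReal) l (𝓝 (g q))) :
    ∃ F : Measure ℝ, IsProbabilityMeasure F ∧ F (Iic 0) = 0 ∧
      (∀ q, 0 < q → laplaceExponent F q = g q) ∧
      ∀ f : ℝ → ℝ, ContinuousOn f (Ioi 0) → (∃ M, ∀ x ∈ Ioi (0 : ℝ), |f x| ≤ M) →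
        Tendsto (fun i => (μ i (Ioi 0)).toReal⁻¹ * ∫ x in Ioi 0, f (c i * x) ∂μ i) l
          (𝓝 (∫ x in Ioi 0, f x ∂F)) := by
  choose P hP using fun i => exists_probabilityMeasure_integral_eq (μ i) (hμ i) (hc i)
  have hlap (i : ι) (q : ℝ) : ∫ x : Ioi (0 : ℝ), (1 - Real.exp (-(q * x))) ∂(P i : Measure _) =
      laplaceExponent (μ i) (q * c i) / (μ i (Ioi 0)).toReal := by
    simp only [hP i fun x => 1 - Real.exp (-(q * x)), laplaceExponent, mul_assoc, div_eq_inv_mul]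
  obtain ⟨F, hF⟩ := exists_tendsto_probabilityMeasure_of_tendsto_laplace (P := P) (l := l)
    (g := fun q => 1 - g q) (by simpa using hg0.const_sub 1) (by simpa using hg1.const_sub 1)
    fun q hq => by
      simpa only [integral_exp_neg_mul_eq_one_sub _ hq, hlap] using (hlim q hq).const_sub 1
  have hconv {f : ℝ → ℝ} (hf : ContinuousOn f (Ioi 0)) (hb : ∃ M, ∀ x ∈ Ioi (0 : ℝ), |f x| ≤ M) :=
    tendsto_integral_of_tendsto_probabilityMeasure_Ioi hF hf hb
  refine ⟨(F : Measure (Ioi (0 : ℝ))).map (↑),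
    Measure.isProbabilityMeasure_map (by fun_prop), ?_, fun q hq => ?_, fun f hf hb => ?_⟩
  · rw [Measure.map_apply measurable_subtype_coe measurableSet_Iic]
    convert measure_empty (μ := (F : Measure (Ioi (0 : ℝ))))
    exact eq_empty_of_forall_notMem fun x (hx : (x : ℝ) ≤ 0) => hx.not_gt x.2
  · have hbdd : ∃ M, ∀ x ∈ Ioi (0 : ℝ), |1 - Real.exp (-(q * x))| ≤ M :=
      ⟨1, fun x hx => norm_one_sub_exp_neg_le_one (mul_pos hq hx).le⟩
    refine tendsto_nhds_unique (hconv (by fun_prop) hbdd) ?_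
    simpa only [hlap] using hlim q hq
  · simpa only [hP] using hconv hf hb

end Rescaling

/-- The function `∫ (1 - exp (-(q * x))) F(dx)` of the generalized Mittag-Leffler law
`F = F_{κ + 1, ρ}`. -/
def mittagLefflerExponent (κ ρ q : ℝ) : ℝ := (1 + q ^ (-(ρ * κ))) ^ (-(1 / κ))

section MittagLeffler

variable {κ ρ : ℝ}

theorem tendsto_mittagLefflerExponent_nhdsGT_zero (hκ : 0 < κ) (hρ : 0 < ρ) :
    Tendsto (mittagLefflerExponent κ ρ) (𝓝[>] 0) (𝓝 0) :=
  (tendsto_rpow_neg_atTop (one_div_pos.2 hκ)).comp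
    (tendsto_atTop_add_const_left _ 1
      (tendsto_rpow_neg_nhdsGT_zero (neg_lt_zero.2 (mul_pos hρ hκ))))

theorem tendsto_mittagLefflerExponent_atTop (hκ : 0 < κ) (hρ : 0 < ρ) :
    Tendsto (mittagLefflerExponent κ ρ) atTop (𝓝 1) := by
  have h := ((tendsto_rpow_neg_atTop (mul_pos hρ hκ)).const_add 1).rpow_const (p := -(1 / κ))
    (.inl (by norm_num))
  rwa [add_zero, Real.one_rpow] at h

end MittagLeffler

/-! ### The scaling limit -/

section ScalingLimit

variable {Ψ : ℝ → ℝ} {ν : ℝ → Measure ℝ} {γ ρ t₀ : ℝ}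

theorem isFlowLine_measure_Ioi (hfin : ∀ t, 0 < t → IsFiniteMeasure (ν t))
    (hnz : ∀ t, 0 < t → ν t (Ioi 0) ≠ 0)
    (hode : ∀ t, 0 < t →
      HasDerivAt (fun u => (ν u (Ioi 0)).toReal) (-Ψ (ν t (Ioi 0)).toReal) t) :
    IsFlowLine Ψ fun t => (ν t (Ioi 0)).toReal := fun t ht =>
  have := hfin t ht
  ⟨ENNReal.toReal_pos (hnz t ht) (measure_ne_top _ _), hode t ht⟩

theorem isFlowLine_laplaceExponent (hfin : ∀ t, 0 < t → IsFiniteMeasure (ν t))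
    (hnz : ∀ t, 0 < t → ν t (Ioi 0) ≠ 0) {q : ℝ} (hq : 0 < q)
    (hode : ∀ t, 0 < t →
      HasDerivAt (fun u => laplaceExponent (ν u) q) (-Ψ (laplaceExponent (ν t) q)) t) :
    IsFlowLine Ψ fun t => laplaceExponent (ν t) q := fun t ht =>
  have := hfin t ht
  ⟨laplaceExponent_pos _ (hnz t ht) hq, hode t ht⟩

theorem converse_scaling_limit_general (hcont : ContinuousOn Ψ (Ioi 0))
    (hpos : ∀ u, 0 < u → 0 < Ψ u) (hγ : 1 < γ) (hΨ : RegularlyVarying Ψ γ (𝓝[>] 0))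
    (hfin : ∀ t, 0 < t → IsFiniteMeasure (ν t)) (hnz : ∀ t, 0 < t → ν t (Ioi 0) ≠ 0)
    (hode : ∀ q, 0 < q → ∀ t, 0 < t →
      HasDerivAt (fun u => laplaceExponent (ν u) q) (-Ψ (laplaceExponent (ν t) q)) t)
    (hodeInf : ∀ t, 0 < t →
      HasDerivAt (fun u => (ν u (Ioi 0)).toReal) (-Ψ (ν t (Ioi 0)).toReal) t)
    (ht₀ : 0 < t₀) (hρ : 0 < ρ ∧ ρ ≤ 1)
    (htail : RegularlyVarying (truncatedMean (ν t₀)) (1 - ρ) atTop) :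
    ∃ lam : ℝ → ℝ, (∀ t, 0 < t → 0 < lam t) ∧ Tendsto lam atTop (𝓝 0) ∧
      ∃ F : Measure ℝ, IsProbabilityMeasure F ∧ F (Iic 0) = 0 ∧
        (∀ q, 0 < q → laplaceExponent F q = mittagLefflerExponent (γ - 1) ρ q) ∧
        ∀ f : ℝ → ℝ, ContinuousOn f (Ioi 0) → (∃ M, ∀ x ∈ Ioi (0 : ℝ), |f x| ≤ M) →
          Tendsto (fun t => (ν t (Ioi 0)).toReal⁻¹ * ∫ x in Ioi 0, f (lam t * x) ∂ν t) atTop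
            (𝓝 (∫ x in Ioi 0, f x ∂F)) := by
  have hκ : 0 < γ - 1 := sub_pos.2 hγ
  have hfin₀ := hfin t₀ ht₀
  have hm := isFlowLine_measure_Ioi hfin hnz hodeInf
  have hφ (q : ℝ) (hq : 0 < q) := isFlowLine_laplaceExponent hfin hnz hq (hode q hq)
  obtain ⟨lam, hlampos, hlam, heq⟩ := exists_scaling_of_tendsto
    (continuousOn_laplaceExponent (ν t₀))
    ((monotoneOn_laplaceExponent (ν t₀)).mono Ioi_subset_Ici_self)
    (fun q hq => laplaceExponent_pos (ν t₀) (hnz t₀ ht₀) hq) (tendsto_laplaceExponent_zero (ν t₀))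
    (tendsto_laplaceExponent_atTop (ν t₀)) (hm.tendsto_nhdsGT_zero hcont hpos)
  have hlim (q : ℝ) (hq : 0 < q) :=
    tendsto_flow_scaled_div (by rwa [sub_add_cancel]) hκ hcont hpos hm hφ ht₀
      (htail.laplaceExponent_of_truncatedMean hρ) hlampos hlam heq hq
  have (t : Ioi (0 : ℝ)) : IsFiniteMeasure (ν t) := hfin t t.2
  obtain ⟨F, hF, hF0, hFg, hFlim⟩ := exists_weak_limit_of_tendsto_laplaceExponent_div
    (l := atTop) (μ := fun t : Ioi (0 : ℝ) => ν t) (fun t => hnz t t.2) (fun t => hlampos t)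
    (tendsto_mittagLefflerExponent_nhdsGT_zero hκ hρ.1)
    (tendsto_mittagLefflerExponent_atTop hκ hρ.1)
    fun q hq => tendsto_comp_val_Ioi_atTop.2 (hlim q hq)
  exact ⟨lam, fun t _ => hlampos t, tendsto_nhds_of_tendsto_nhdsWithin hlam, F, hF, hF0, hFg,
    fun f hf hb => tendsto_comp_val_Ioi_atTop.1 (hFlim f hf hb)⟩

end ScalingLimit

/-- converse direction. If `Ψ` is a critical branching
mechanism regularly varying at 0 with index `γ ∈ (1,2]`, and at some time
`t₀` the mass distribution function satisfies
`∫_{(0,x]} y ν_{t₀}(dy) ∼ x^{1-ρ} L(x)` as `x → ∞` with `L` slowly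
varying, then with `α(t) = ν_t((0,∞))⁻¹` and a suitable `λ(t) → 0`, the
rescaled measures converge weakly to the Mittag-Leffler law `F_{γ,ρ}`. -/
theorem converse_scaling_limit
    (Ψ : ℝ → ℝ) (β : ℝ) (π : Measure ℝ)
    (hβ : 0 ≤ β)
    (hπfin : ∫⁻ x in Ioi (0:ℝ), ENNReal.ofReal (min x (x ^ 2)) ∂π < ⊤)
    (hΨ : ∀ u : ℝ, 0 < u →
      Ψ u = β * u ^ 2 + ∫ x in Ioi (0:ℝ), (Real.exp (-(u * x)) - 1 + u * x) ∂π)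
    (γ : ℝ) (hγ : 1 < γ ∧ γ ≤ 2)
    (hreg : ∀ x : ℝ, 0 < x →
      Tendsto (fun t => Ψ (t * x) / Ψ t) (nhdsWithin 0 (Ioi 0)) (nhds (x ^ γ)))
    (ν : ℝ → Measure ℝ)
    (hfin : ∀ t : ℝ, 0 < t → IsFiniteMeasure (ν t))
    (hnz : ∀ t : ℝ, 0 < t → ν t (Ioi 0) ≠ 0)
    (hconc : ∀ t : ℝ, 0 < t → ν t (Iic 0) = 0)
    (hode : ∀ q : ℝ, 0 < q → ∀ t : ℝ, 0 < t →
      HasDerivAt (fun u => ∫ x in Ioi (0:ℝ), (1 - Real.exp (-(q * x))) ∂(ν u))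
        (-Ψ (∫ x in Ioi (0:ℝ), (1 - Real.exp (-(q * x))) ∂(ν t))) t)
    (hodeInf : ∀ t : ℝ, 0 < t →
      HasDerivAt (fun u => ((ν u) (Ioi 0)).toReal) (-Ψ (((ν t) (Ioi 0)).toReal)) t)
    (t₀ : ℝ) (ht₀ : 0 < t₀) (ρ : ℝ) (hρ : 0 < ρ ∧ ρ ≤ 1)
    (L : ℝ → ℝ)
    (hLpos : ∀ᶠ x in atTop, 0 < L x)
    (hLslow : ∀ c : ℝ, 0 < c → Tendsto (fun x => L (c * x) / L x) atTop (nhds 1))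
    (htail : Tendsto (fun x => (∫ y in Ioc (0:ℝ) x, y ∂(ν t₀)) / (x ^ (1 - ρ) * L x))
      atTop (nhds 1)) :
    ∃ lam : ℝ → ℝ, (∀ t : ℝ, 0 < t → 0 < lam t) ∧
      Tendsto lam atTop (nhds 0) ∧
      ∃ F : Measure ℝ, IsProbabilityMeasure F ∧ F (Iic 0) = 0 ∧
        (∀ q : ℝ, 0 < q →
          ∫ x in Ioi (0:ℝ), (1 - Real.exp (-(q * x))) ∂F
            = (1 + q ^ (-(ρ * (γ - 1)))) ^ (-(1 / (γ - 1)))) ∧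
        (∀ f : ℝ → ℝ, ContinuousOn f (Ioi 0) →
          (∃ M : ℝ, ∀ x ∈ Ioi (0:ℝ), |f x| ≤ M) →
          Tendsto (fun t => (((ν t) (Ioi 0)).toReal)⁻¹ *
              ∫ x in Ioi (0:ℝ), f (lam t * x) ∂(ν t)) atTop
            (nhds (∫ x in Ioi (0:ℝ), f x ∂F))) := by
  have heq : EqOn Ψ (branchingMechanism β π) (Ioi 0) := hΨ
  have hΨrv : RegularlyVarying Ψ γ (𝓝[>] 0) := by
    simpa only [RegularlyVarying, mul_comm] using hreg
  have hL : RegularlyVarying L 0 atTop := by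
    simpa only [RegularlyVarying, Real.rpow_zero] using hLslow
  exact converse_scaling_limit_general ((continuousOn_branchingMechanism hπfin).congr heq)
    (fun _ => hΨrv.pos_of_eqOn_branchingMechanism hβ hπfin heq) hγ.1 hΨrv hfin hnz hode hodeInf
    ht₀ hρ (hL.of_tendsto_div_rpow_mul htail)
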